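/- Let (X,p) be a legal allocation in the divisible multi-slot setting with m = Σ_{i∈I} κ_i. If there exists a bidder u ∈ B with ṽ_u < v_u, then (X,p) contains a trading swap, i.e., there exist a legal allocation (X',p') and bidders u, w ∈ I satisfying conditions (1)–(5) of a trading swap. -/

import Mathlib

/-!
Divisible multi-slot sponsored-search setting.  STATEMENT 1: if some
bidder `u` with positive remaining budget has `ṽ_u < v_u`, then the
legal allocation `(X, p)` contains a trading swap.
-/

open Finset

/-- Legality of a divisible allocation `(X, p)`. -/
def LegalAlloc (n m : ℕ) (κ : Fin n → ℕ) (b : Fin n → ℝ)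
    (X : Fin n → ℕ → ℝ) (p : Fin n → ℝ) : Prop :=
  (∀ i j, j < m → 0 ≤ X i j) ∧
  (∀ i, ∑ j ∈ Finset.range m, X i j ≤ (κ i : ℝ)) ∧
  (∀ j, j < m → ∑ i, X i j = 1) ∧
  (∀ i, p i ≤ b i)

/-- `l(i)`: the (index of the) lowest-quality slot assigned to bidder `i`. -/
noncomputable def lSlot (m : ℕ) {n : ℕ} (X : Fin n → ℕ → ℝ) (i : Fin n) : ℕ :=
  sInf {j | j < m ∧ 0 < X i j}

/-- `h'(i)`: the (index of the) highest-quality slot assigned to bidder `i`. -/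
noncomputable def hSlot' (m : ℕ) {n : ℕ} (X : Fin n → ℕ → ℝ) (i : Fin n) : ℕ :=
  sSup {j | j < m ∧ 0 < X i j}

/-- `h(i) = min { j : α_j = α_{h'(i)} }`. -/
noncomputable def hSlot (m : ℕ) (α : ℕ → ℝ) {n : ℕ}
    (X : Fin n → ℕ → ℝ) (i : Fin n) : ℕ :=
  sInf {j | j < m ∧ α j = α (hSlot' m X i)}

/-- `a ∈ Ñ_i`: `a ≠ i` and `a` is reachable from `i` by the relation
`y ∈ N_x ↔ h(y) > l(x)` (the union of the iterated neighborhood sets). -/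
noncomputable def inTildeN (m : ℕ) (α : ℕ → ℝ) {n : ℕ}
    (X : Fin n → ℕ → ℝ) (i a : Fin n) : Prop :=
  a ≠ i ∧ Relation.TransGen (fun x y : Fin n => lSlot m X x < hSlot m α X y) i a

/-- `(X, p)` contains a trading swap: there are a legal allocation
`(X', p')` and bidders `u, w` satisfying conditions (1)–(5). -/
def ContainsTradingSwap (n m : ℕ) (κ : Fin n → ℕ) (b : Fin n → ℝ)
    (α : ℕ → ℝ) (v : Fin n → ℝ)
    (X : Fin n → ℕ → ℝ) (p : Fin n → ℝ) : Prop :=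
  ∃ (X' : Fin n → ℕ → ℝ) (p' : Fin n → ℝ) (u w : Fin n),
    LegalAlloc n m κ b X' p' ∧
    -- (1) w ∈ Ñ_u
    inTildeN m α X u w ∧
    -- (2) all other bidders keep their weighted capacity and payment
    (∀ i : Fin n, i ≠ u → i ≠ w →
      (∑ j ∈ Finset.range m, α j * X' i j) = (∑ j ∈ Finset.range m, α j * X i j) ∧
      p' i = p i) ∧
    -- (3) δ := Σ_j α_j (x'_{u,j} − x_{u,j}) = Σ_j α_j (x_{w,j} − x'_{w,j}) > 0
    0 < (∑ j ∈ Finset.range m, α j * (X' u j - X u j)) ∧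
    (∑ j ∈ Finset.range m, α j * (X' u j - X u j)) =
      (∑ j ∈ Finset.range m, α j * (X w j - X' w j)) ∧
    -- (4) v_u δ > p'_u − p_u = p_w − p'_w = v_w δ
    p' u - p u = p w - p' w ∧
    p w - p' w = v w * (∑ j ∈ Finset.range m, α j * (X' u j - X u j)) ∧
    v u * (∑ j ∈ Finset.range m, α j * (X' u j - X u j)) > p' u - p u ∧
    -- (5) p'_u ≤ b_u
    p' u ≤ b u

/-!
The condition `l(x) < h(y)` says that the slot `l(x)` of `x` has strictly lower quality than the
slot `h'(y)` of `y`. Exchanging equal small amounts of the two changes no row or column sum of `X`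
and shifts weighted capacity from `y` to `x`. Such directions can be normalised to shift one unit,
and then they add up along a path `u = x₀, x₁, …, x_k = w` witnessing `w ∈ Ñ_u`: the intermediate
bidders gain as much as they lose. A small enough step `t` in the summed direction keeps `X`
nonnegative, and `u` can pay `t * v_w` for it out of his remaining budget.
-/

open Topology

/-- A direction `D` in which an allocation `X` of the slots in `s` can be perturbed so that one unit
of weighted capacity passes from bidder `y` to bidder `x`, per unit of step length. Sign conditions
are imposed only where `X` vanishes, since elsewhere a small step preserves positivity. -/
structure IsTransferDirection {ι σ : Type*} [Fintype ι] [DecidableEq ι] (s : Finset σ) (α : σ → ℝ)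
    (X : ι → σ → ℝ) (x y : ι) (D : ι → σ → ℝ) : Prop where
  nonneg_of_eq_zero : ∀ i, ∀ j ∈ s, X i j = 0 → 0 ≤ D i j
  row_sum : ∀ i, ∑ j ∈ s, D i j = 0
  col_sum : ∀ j, ∑ i, D i j = 0
  capacity : ∀ i, ∑ j ∈ s, α j * D i j = (Pi.single x 1 - Pi.single y 1 : ι → ℝ) i

namespace IsTransferDirection

variable {ι σ : Type*} [Fintype ι] [DecidableEq ι] {s : Finset σ} {α : σ → ℝ} {X : ι → σ → ℝ}
  {x y z : ι} {D E : ι → σ → ℝ}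

theorem add (hD : IsTransferDirection s α X x y D) (hE : IsTransferDirection s α X y z E) :
    IsTransferDirection s α X x z (D + E) where
  nonneg_of_eq_zero i j hj h :=
    add_nonneg (hD.nonneg_of_eq_zero i j hj h) (hE.nonneg_of_eq_zero i j hj h)
  row_sum i := by simp [sum_add_distrib, hD.row_sum, hE.row_sum]
  col_sum j := by simp [sum_add_distrib, hD.col_sum, hE.col_sum]
  capacity i := by simp [mul_add, sum_add_distrib, hD.capacity, hE.capacity]

theorem of_exchange [DecidableEq σ] {l h : σ} (hl : l ∈ s) (hh : h ∈ s) (hxl : 0 < X x l)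
    (hyh : 0 < X y h) (hα : α l < α h) :
    IsTransferDirection s α X x y fun i j ↦ (Pi.single x 1 - Pi.single y 1 : ι → ℝ) i *
      ((α h - α l)⁻¹ * (Pi.single h 1 - Pi.single l 1 : σ → ℝ) j) where
  nonneg_of_eq_zero i j _ hX := by
    have hinv : 0 ≤ (α h - α l)⁻¹ := inv_nonneg.2 (sub_nonneg.2 hα.le)
    have hi : i = x → j ≠ l := by rintro rfl rfl; exact hxl.ne' hX
    have hj : i = y → j ≠ h := by rintro rfl rfl; exact hyh.ne' hX
    simp only [Pi.sub_apply, Pi.single_apply]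
    split_ifs <;> simp_all
  row_sum i := by simp [← mul_sum, hl, hh]
  col_sum j := by simp [← sum_mul]
  capacity i := by
    have hsum : ∑ j ∈ s, α j * (Pi.single h 1 - Pi.single l 1 : σ → ℝ) j = α h - α l := by
      simp [mul_sub, Pi.single_apply, hl, hh]
    simp_rw [mul_left_comm (α _), ← mul_sum, hsum]
    rw [inv_mul_cancel₀ (sub_pos.2 hα).ne', mul_one]

theorem sum_mul_step_sub (hD : IsTransferDirection s α X x y D) (t : ℝ) (i : ι) :
    ∑ j ∈ s, α j * ((X + t • D) i j - X i j) = t * (Pi.single x 1 - Pi.single y 1 : ι → ℝ) i := by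
  rw [← hD.capacity i, mul_sum]
  refine sum_congr rfl fun j _ ↦ ?_
  simp only [Pi.add_apply, Pi.smul_apply, smul_eq_mul, add_sub_cancel_left, mul_left_comm]

end IsTransferDirection

theorem eventually_nonneg_add_mul {a d : ℝ} (ha : 0 ≤ a) (hd : a = 0 → 0 ≤ d) :
    ∀ᶠ t in 𝓝[>] (0 : ℝ), 0 ≤ a + t * d := by
  rcases ha.eq_or_lt' with rfl | ha
  · filter_upwards [self_mem_nhdsWithin] with t ht
    simpa using mul_nonneg (le_of_lt ht) (hd rfl)
  · have hcont : ContinuousAt (fun t : ℝ ↦ a + t * d) 0 := by fun_prop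
    have hpos : ∀ᶠ t in 𝓝 (0 : ℝ), 0 < a + t * d := hcont.eventually_const_lt (by simpa using ha)
    exact (hpos.filter_mono nhdsWithin_le_nhds).mono fun _ ↦ le_of_lt

theorem add_smul_single_sub_single_le {ι : Type*} [DecidableEq ι] {p b : ι → ℝ} {u w : ι} {c : ℝ}
    (hp : p ≤ b) (hc : 0 ≤ c) (hu : p u + c ≤ b u) :
    p + c • (Pi.single u 1 - Pi.single w 1) ≤ b := by
  intro i
  have hpi := hp i
  simp only [Pi.add_apply, Pi.smul_apply, Pi.sub_apply, Pi.single_apply, smul_eq_mul]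
  split_ifs with hiu hiw
  · simpa using hpi
  · simpa [hiu] using hu
  all_goals linarith

section TradingSwap

variable {n m : ℕ} {κ : Fin n → ℕ} {b v p p' : Fin n → ℝ} {α : ℕ → ℝ} {X D : Fin n → ℕ → ℝ}
  {u w x y : Fin n} {t : ℝ}

namespace LegalAlloc

theorem row_sum_eq (hX : LegalAlloc n m κ b X p) (hm : m = ∑ i, κ i) (i : Fin n) :
    ∑ j ∈ range m, X i j = κ i := by
  obtain ⟨-, hrow, hcol, -⟩ := hX
  have htotal : ∑ i, ∑ j ∈ range m, X i j = ∑ i, (κ i : ℝ) := by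
    rw [sum_comm, sum_congr rfl fun j hj ↦ hcol j (mem_range.1 hj), ← Nat.cast_sum, ← hm]
    simp
  exact (sum_eq_sum_iff_of_le fun i _ ↦ hrow i).1 htotal i (mem_univ i)

theorem exists_share (hX : LegalAlloc n m κ b X p) (hκ : ∀ i, 1 ≤ κ i) (hm : m = ∑ i, κ i)
    (i : Fin n) : ∃ j < m, 0 < X i j := by
  have hsum : (∑ _j ∈ range m, 0) < ∑ j ∈ range m, X i j := by
    rw [sum_const_zero, hX.row_sum_eq hm]
    exact_mod_cast hκ i
  simpa only [mem_range] using exists_lt_of_sum_lt hsum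

theorem step (hX : LegalAlloc n m κ b X p) (hD : IsTransferDirection (range m) α X x y D)
    (hnonneg : ∀ i, ∀ j ∈ range m, 0 ≤ X i j + t * D i j) (hp' : p' ≤ b) :
    LegalAlloc n m κ b (X + t • D) p' := by
  obtain ⟨-, hrow, hcol, -⟩ := hX
  refine ⟨fun i j hj ↦ hnonneg i j (mem_range.2 hj), fun i ↦ ?_, fun j hj ↦ ?_, hp'⟩
  · simpa [sum_add_distrib, ← mul_sum, hD.row_sum] using hrow i
  · simpa [sum_add_distrib, ← mul_sum, hD.col_sum] using hcol j hj

theorem eventually_step_nonneg (hX : LegalAlloc n m κ b X p)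
    (hD : IsTransferDirection (range m) α X x y D) :
    ∀ᶠ t in 𝓝[>] (0 : ℝ), ∀ i, ∀ j ∈ range m, 0 ≤ X i j + t * D i j :=
  Filter.eventually_all.2 fun i ↦ (Filter.eventually_all_finset _).2 fun j hj ↦
    eventually_nonneg_add_mul (hX.1 i j (mem_range.1 hj)) (hD.nonneg_of_eq_zero i j hj)

end LegalAlloc

theorem lSlot_mem (hx : ∃ j < m, 0 < X x j) : lSlot m X x < m ∧ 0 < X x (lSlot m X x) :=
  Nat.sInf_mem hx

theorem hSlot'_mem (hy : ∃ j < m, 0 < X y j) : hSlot' m X y < m ∧ 0 < X y (hSlot' m X y) :=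
  Nat.sSup_mem hy ⟨m, fun _ hj ↦ hj.1.le⟩

theorem quality_lt_of_lt_hSlot (hα : MonotoneOn α (Set.Iio m)) (hy : ∃ j < m, 0 < X y j) {j : ℕ}
    (hj : j < hSlot m α X y) : α j < α (hSlot' m X y) := by
  have hmem : hSlot m α X y < m ∧ α (hSlot m α X y) = α (hSlot' m X y) :=
    Nat.sInf_mem (s := {j | j < m ∧ α j = α (hSlot' m X y)}) ⟨_, (hSlot'_mem hy).1, rfl⟩
  have hjm : j < m := hj.trans hmem.1
  have hle : α j ≤ α (hSlot' m X y) := hmem.2 ▸ hα hjm hmem.1 hj.le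
  exact hle.lt_of_ne fun heq ↦ Nat.notMem_of_lt_sInf hj ⟨hjm, heq⟩

theorem exists_isTransferDirection_of_transGen (hα : MonotoneOn α (Set.Iio m))
    (hX : ∀ i, ∃ j < m, 0 < X i j)
    (h : Relation.TransGen (fun x y ↦ lSlot m X x < hSlot m α X y) x y) :
    ∃ D, IsTransferDirection (range m) α X x y D := by
  have hedge {x y : Fin n} (hxy : lSlot m X x < hSlot m α X y) :
      ∃ D, IsTransferDirection (range m) α X x y D := by
    obtain ⟨hlm, hl⟩ := lSlot_mem (hX x)
    obtain ⟨hhm, hh⟩ := hSlot'_mem (hX y)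
    exact ⟨_, .of_exchange (mem_range.2 hlm) (mem_range.2 hhm) hl hh
      (quality_lt_of_lt_hSlot hα (hX y) hxy)⟩
  induction h with
  | single hxy => exact hedge hxy
  | tail _ hyz ih =>
    obtain ⟨D, hD⟩ := ih
    obtain ⟨E, hE⟩ := hedge hyz
    exact ⟨D + E, hD.add hE⟩

theorem ContainsTradingSwap.of_step (hX : LegalAlloc n m κ b X p) (hw : inTildeN m α X u w)
    (hD : IsTransferDirection (range m) α X u w D) (ht : 0 < t)
    (hnonneg : ∀ i, ∀ j ∈ range m, 0 ≤ X i j + t * D i j) (hvw : 0 ≤ v w) (hvu : v w < v u)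
    (hbudget : p u + v w * t ≤ b u) : ContainsTradingSwap n m κ b α v X p := by
  have hwu : w ≠ u := hw.1
  set p' : Fin n → ℝ := p + (v w * t) • (Pi.single u 1 - Pi.single w 1) with hp'
  have hp'u : p' u = p u + v w * t := by simp [hp', hwu.symm]
  have hp'w : p' w = p w - v w * t := by simp [hp', hwu, sub_eq_add_neg]
  have hp'b : p' ≤ b :=
    add_smul_single_sub_single_le hX.2.2.2 (mul_nonneg hvw ht.le) hbudget
  have hgain : ∑ j ∈ range m, α j * ((X + t • D) u j - X u j) = t := by
    rw [hD.sum_mul_step_sub]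
    simp [hwu.symm]
  have hloss : ∑ j ∈ range m, α j * (X w j - (X + t • D) w j) = t := by
    simp_rw [← neg_sub ((X + t • D) w _), mul_neg, sum_neg_distrib, hD.sum_mul_step_sub]
    simp [hwu]
  have hother (i : Fin n) (hiu : i ≠ u) (hiw : i ≠ w) :
      ∑ j ∈ range m, α j * (X + t • D) i j = ∑ j ∈ range m, α j * X i j := by
    rw [← sub_eq_zero, ← sum_sub_distrib]
    simp_rw [← mul_sub]
    rw [hD.sum_mul_step_sub]
    simp [hiu, hiw]
  refine ⟨X + t • D, p', u, w, hX.step hD hnonneg hp'b, hw,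
    fun i hiu hiw ↦ ⟨hother i hiu hiw, by simp [hp', hiu, hiw]⟩, ?_⟩
  rw [hgain, hloss, hp'u, hp'w, add_sub_cancel_left, sub_sub_cancel]
  exact ⟨ht, rfl, rfl, rfl, mul_lt_mul_of_pos_right hvu ht, hbudget⟩

theorem stmt1_general (hX : LegalAlloc n m κ b X p) (hsupp : ∀ i, ∃ j < m, 0 < X i j)
    (hα : MonotoneOn α (Set.Iio m)) (hpu : p u < b u) (hw : inTildeN m α X u w) (hvw : 0 ≤ v w)
    (hvu : v w < v u) : ContainsTradingSwap n m κ b α v X p := by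
  obtain ⟨D, hD⟩ := exists_isTransferDirection_of_transGen hα hsupp hw.2
  have haffordable : ∀ᶠ t in 𝓝[>] (0 : ℝ), p u + v w * t < b u := by
    have hcont : ContinuousAt (fun t : ℝ ↦ p u + v w * t) 0 := by fun_prop
    exact (hcont.eventually_lt_const (by simpa using hpu)).filter_mono nhdsWithin_le_nhds
  obtain ⟨t, ht, hnonneg, hbudget⟩ :=
    (eventually_mem_nhdsWithin.and ((hX.eventually_step_nonneg hD).and haffordable)).exists
  exact .of_step hX hw hD ht hnonneg hvw hvu hbudget.le

end TradingSwap

/-- if there exists a bidder `u ∈ B` with `ṽ_u < v_u`,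
then `(X, p)` contains a trading swap. -/
theorem stmt1 {n m : ℕ} (κ : Fin n → ℕ) (hκ : ∀ i, 1 ≤ κ i)
    (hm : m = ∑ i, κ i)
    (α : ℕ → ℝ) (hα0 : ∀ j, 0 ≤ α j) (hαmono : Monotone α)
    (v b : Fin n → ℝ) (hv : ∀ i, 0 ≤ v i)
    (X : Fin n → ℕ → ℝ) (p : Fin n → ℝ)
    (hlegal : LegalAlloc n m κ b X p)
    (hu : ∃ u : Fin n, p u < b u ∧ ∃ a : Fin n, inTildeN m α X u a ∧ v a < v u) :
    ContainsTradingSwap n m κ b α v X p := by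
  obtain ⟨u, hpu, w, hw, hvu⟩ := hu
  exact stmt1_general hlegal (hlegal.exists_share hκ hm) (hαmono.monotoneOn _) hpu hw (hv w) hvu
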